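/- arXiv:2412.10862 — 5 statements merged into one kernel-verified Lean document; each statement's English description precedes it below -/
import Mathlib

section
/- For any spinor κ ∈ ℂ² (regarded as a 2×1 complex matrix) and any A ∈ SL(2,ℂ), the following identity of 2×2 matrices holds, where each parenthesized 1×1 matrix product is regarded as a complex scalar: (A κ κᵀ J A* + A J conj(κ) κ* A*) · (κ* A* A κ) = (A κ κᵀ Aᵀ J + J conj(A) conj(κ) κ* A*) · (κ* κ) + (A κ κ* A*) · (κᵀ J A* A κ + κ* A* A J conj(κ)). -/
open Matrix

/-- The matrix J = [[0, i], [−i, 0]]. -/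
def Jmat : Matrix (Fin 2) (Fin 2) ℂ := !![0, Complex.I; -Complex.I, 0]

/-- Penrose–Rindler style identity: for a spinor κ (a 2×1 complex matrix) and A ∈ SL(2,ℂ),
`(AκκᵀJA* + AJ conj(κ) κ*A*)·(κ*A*Aκ) = (AκκᵀAᵀJ + J conj(A) conj(κ) κ*A*)·(κ*κ)
  + (Aκκ*A*)·(κᵀJA*Aκ + κ*A*AJ conj(κ))`,
where each 1×1 matrix product is regarded as a complex scalar. -/
theorem crazy_identity (κ : Matrix (Fin 2) (Fin 1) ℂ) (A : Matrix (Fin 2) (Fin 2) ℂ)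
    (hA : A.det = 1) :
    ((κᴴ * Aᴴ * A * κ) 0 0) •
        (A * κ * κᵀ * Jmat * Aᴴ + A * Jmat * κ.map (starRingEnd ℂ) * κᴴ * Aᴴ) =
      ((κᴴ * κ) 0 0) •
          (A * κ * κᵀ * Aᵀ * Jmat
            + Jmat * A.map (starRingEnd ℂ) * κ.map (starRingEnd ℂ) * κᴴ * Aᴴ)
        + ((κᵀ * Jmat * Aᴴ * A * κ + κᴴ * Aᴴ * A * Jmat * κ.map (starRingEnd ℂ)) 0 0) •
            (A * κ * κᴴ * Aᴴ) := by
  have hB := congrArg (starRingEnd ℂ) hA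
  rw [Matrix.det_fin_two] at hA hB
  simp only [map_sub, map_mul, map_one] at hB
  ext i j
  fin_cases i <;> fin_cases j <;>
  simp only [Jmat, Matrix.smul_apply, Matrix.add_apply, Matrix.mul_apply, Matrix.map_apply, Matrix.conjTranspose_apply, Matrix.transpose_apply, Fin.sum_univ_two, Fin.sum_univ_one, Matrix.of_apply, Matrix.cons_val_zero, Matrix.cons_val_one, Matrix.cons_val', Matrix.cons_val_fin_one, smul_eq_mul, Fin.zero_eta, Fin.mk_one, Fin.isValue, Finset.univ_unique, Fin.default_eq_zero, Finset.sum_singleton, ← starRingEnd_apply, mul_zero, zero_mul, add_zero, zero_add] <;>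
  generalize A 0 0 = a at * <;> generalize A 0 1 = b at * <;> generalize A 1 0 = c at * <;> generalize A 1 1 = d at * <;>
  generalize κ 0 0 = x at * <;> generalize κ 1 0 = y at *
  · linear_combination (starRingEnd ℂ x * x + starRingEnd ℂ y * y) * ((-Complex.I*(a*x+b*y)*(c*x+d*y)) * hB + (Complex.I*(starRingEnd ℂ a * starRingEnd ℂ x+starRingEnd ℂ b * starRingEnd ℂ y)*(starRingEnd ℂ c * starRingEnd ℂ x+starRingEnd ℂ d * starRingEnd ℂ y)) * hA)
  · linear_combination (starRingEnd ℂ x * x + starRingEnd ℂ y * y) * ((Complex.I*(a*x+b*y)*(a*x+b*y)) * hB + (Complex.I*(starRingEnd ℂ c * starRingEnd ℂ x+starRingEnd ℂ d * starRingEnd ℂ y)*(starRingEnd ℂ c * starRingEnd ℂ x+starRingEnd ℂ d * starRingEnd ℂ y)) * hA)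
  · linear_combination (starRingEnd ℂ x * x + starRingEnd ℂ y * y) * ((-Complex.I*(c*x+d*y)*(c*x+d*y)) * hB + (-Complex.I*(starRingEnd ℂ a * starRingEnd ℂ x+starRingEnd ℂ b * starRingEnd ℂ y)*(starRingEnd ℂ a * starRingEnd ℂ x+starRingEnd ℂ b * starRingEnd ℂ y)) * hA)
  · linear_combination (starRingEnd ℂ x * x + starRingEnd ℂ y * y) * ((Complex.I*(a*x+b*y)*(c*x+d*y)) * hB + (-Complex.I*(starRingEnd ℂ a * starRingEnd ℂ x+starRingEnd ℂ b * starRingEnd ℂ y)*(starRingEnd ℂ c * starRingEnd ℂ x+starRingEnd ℂ d * starRingEnd ℂ y)) * hA)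
end

section
/- Let κ₁, …, κ_d ∈ ℝ² ∖ {0} be real spinors, κ_i = (ξ_i, η_i), whose centres ξ_i/η_i ∈ ℝ ∪ {∞} are distinct and in order around ∂ℍ²; concretely, suppose η_i ≠ 0 for all i ≥ 2, the finite ratios satisfy ξ₂/η₂ > ξ₃/η₃ > ⋯ > ξ_d/η_d, and either η₁ = 0 or (η₁ ≠ 0 and ξ₁/η₁ > ξ₂/η₂). Then there exist signs ε₁, …, ε_d ∈ {+1, −1} such that for all i < j one has {ε_iκ_i, ε_jκ_j} = ε_iε_j(ξ_iη_j − ξ_jη_i) > 0. (This is the existence of spin-coherent planar spin decorations on horocycles with distinct in-order centres: the corresponding lambda lengths λ_{ij} are positive for i < j and negative for i > j.) -/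
theorem aux_sgn (x : ℝ) (hx : x ≠ 0) : 0 < (if 0 < x then (1:ℝ) else -1) * x := by
  split_ifs with h
  · linarith
  · have : x < 0 := lt_of_le_of_ne (not_lt.mp h) hx
    linarith

theorem aux_pair (a b c e s t : ℝ) (hb : b ≠ 0) (he : e ≠ 0) (h : c / e < a / b)
    (hs : 0 < s * b) (ht : 0 < t * e) : 0 < s * t * (a * e - c * b) := by
  have h1 : s * t * (a * e - c * b) = (s * b) * (t * e) * (a / b - c / e) := by
    field_simp
  rw [h1]
  exact mul_pos (mul_pos hs ht) (sub_pos.mpr h)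

/-- Existence of spin-coherent planar spin decorations: given real spinors κ₁, …, κ_d
(indexed here by `Fin (d+1)`, index 0 being κ₁) whose centres ξᵢ/ηᵢ ∈ ℝ ∪ {∞} are distinct
and in order around ∂ℍ² — concretely ηᵢ ≠ 0 for i ≥ 2, the finite ratios strictly decrease,
and either η₁ = 0 or ξ₁/η₁ exceeds all the other ratios — there exist signs εᵢ ∈ {±1} such
that `{εᵢκᵢ, εⱼκⱼ} = εᵢεⱼ(ξᵢηⱼ − ξⱼηᵢ) > 0` for all i < j. -/
theorem spin_coherent_exists (d : ℕ) (κ : Fin (d+1) → ℝ × ℝ)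
    (hne : ∀ i, κ i ≠ 0)
    (hη : ∀ i : Fin (d+1), i ≠ 0 → (κ i).2 ≠ 0)
    (horder : ∀ i j : Fin (d+1), 0 < i → i < j →
      (κ j).1 / (κ j).2 < (κ i).1 / (κ i).2)
    (hfirst : (κ 0).2 = 0 ∨ ((κ 0).2 ≠ 0 ∧ ∀ j : Fin (d+1), 0 < j →
      (κ j).1 / (κ j).2 < (κ 0).1 / (κ 0).2)) :
    ∃ ε : Fin (d+1) → ℝ, (∀ i, ε i = 1 ∨ ε i = -1) ∧
      ∀ i j : Fin (d+1), i < j →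
        0 < ε i * ε j * ((κ i).1 * (κ j).2 - (κ j).1 * (κ i).2) := by
  have key : ∀ i, ∃ s : ℝ, (s = 1 ∨ s = -1) ∧ ((κ i).2 ≠ 0 → 0 < s * (κ i).2) ∧
      ((κ i).2 = 0 → 0 < s * (κ i).1) := by
    intro i
    by_cases h : (κ i).2 = 0
    · have h1 : (κ i).1 ≠ 0 := fun h1 => hne i (Prod.ext h1 h)
      exact ⟨if 0 < (κ i).1 then 1 else -1, by split_ifs <;> simp, fun h' => absurd h h',
        fun _ => aux_sgn _ h1⟩
    · exact ⟨if 0 < (κ i).2 then 1 else -1, by split_ifs <;> simp, fun _ => aux_sgn _ h,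
        fun h' => absurd h' h⟩
  choose ε h1 h2 h3 using key
  refine ⟨ε, h1, fun i j hij => ?_⟩
  have hj0 : 0 < j := lt_of_le_of_lt (Fin.zero_le i) hij
  have hj := hη j hj0.ne'
  by_cases hi : i = 0
  · subst hi
    rcases hfirst with h | ⟨h, h'⟩
    · have := mul_pos (h3 0 h) (h2 j hj)
      rw [h]
      linarith
    · exact aux_pair _ _ _ _ _ _ h hj (h' j hj0) (h2 0 h) (h2 j hj)
  · exact aux_pair _ _ _ _ _ _ (hη i hi) hj (horder i j (Fin.pos_iff_ne_zero.mpr hi) hij)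
      (h2 i (hη i hi)) (h2 j hj)
end

section
/- For nonzero spinors κ, ν ∈ ℂ² ∖ {0}, the following are equivalent: (i) {κ, ν} is negative imaginary, i.e. {κ, ν} has zero real part and strictly negative imaginary part; (ii) ν = α·κ + b·Z(κ) for some α ∈ ℂ and some real b > 0. -/
/-- The spinor inner product `{κ, ν} = ξ₁η₂ − ξ₂η₁`. -/
def spinorInner (κ ν : ℂ × ℂ) : ℂ := κ.1 * ν.2 - ν.1 * κ.2

/-- The map Z(κ) = J·conj(κ) = (i·conj η, −i·conj ξ). -/
def Zmap (κ : ℂ × ℂ) : ℂ × ℂ :=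
  (Complex.I * (starRingEnd ℂ) κ.2, -Complex.I * (starRingEnd ℂ) κ.1)

/-- For nonzero spinors κ, ν: `{κ, ν}` is negative imaginary (zero real part and strictly
negative imaginary part) if and only if ν = α·κ + b·Z(κ) for some α ∈ ℂ and real b > 0. -/
theorem negative_imaginary_iff (κ ν : ℂ × ℂ) (hκ : κ ≠ 0) (hν : ν ≠ 0) :
    ((spinorInner κ ν).re = 0 ∧ (spinorInner κ ν).im < 0) ↔
      ∃ (α : ℂ) (b : ℝ), 0 < b ∧ ν = α • κ + b • Zmap κ := by
  obtain ⟨x, y⟩ := κ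
  obtain ⟨u, v⟩ := ν
  have hN : 0 < Complex.normSq x + Complex.normSq y := by
    by_cases hx : x = 0
    · have hy : y ≠ 0 := by
        rintro rfl
        exact hκ (by simp [hx])
      have := Complex.normSq_pos.2 hy
      have := Complex.normSq_nonneg x
      linarith
    · have := Complex.normSq_pos.2 hx
      have := Complex.normSq_nonneg y
      linarith
  constructor
  · rintro ⟨h1, h2⟩
    have hS : spinorInner (x, y) (u, v) = ((spinorInner (x, y) (u, v)).im : ℂ) * Complex.I := by
      apply Complex.ext <;> simp [h1]
    generalize ht : (spinorInner (x, y) (u, v)).im = t at *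
    simp only [spinorInner] at hS
    have hNc : ((starRingEnd ℂ) x * x + (starRingEnd ℂ) y * y : ℂ) ≠ 0 := by
      rw [← Complex.normSq_eq_conj_mul_self, ← Complex.normSq_eq_conj_mul_self,
        ← Complex.ofReal_add]
      exact_mod_cast hN.ne'
    refine ⟨((starRingEnd ℂ) x * u + (starRingEnd ℂ) y * v) /
      ((starRingEnd ℂ) x * x + (starRingEnd ℂ) y * y),
      -t / (Complex.normSq x + Complex.normSq y), div_pos (by linarith) hN, ?_⟩
    have hb : ((-t / (Complex.normSq x + Complex.normSq y) : ℝ) : ℂ) =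
        -t / ((starRingEnd ℂ) x * x + (starRingEnd ℂ) y * y) := by
      push_cast
      rw [Complex.normSq_eq_conj_mul_self, Complex.normSq_eq_conj_mul_self]
    ext1
    · simp only [Zmap, Prod.fst_add, Prod.smul_fst, smul_eq_mul, Complex.real_smul, hb]
      rw [div_mul_eq_mul_div, div_mul_eq_mul_div, ← add_div, eq_div_iff hNc]
      linear_combination -(starRingEnd ℂ) y * hS
    · simp only [Zmap, Prod.snd_add, Prod.smul_snd, smul_eq_mul, Complex.real_smul, hb]
      rw [div_mul_eq_mul_div, div_mul_eq_mul_div, ← add_div, eq_div_iff hNc]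
      linear_combination (starRingEnd ℂ) x * hS
  · rintro ⟨α, b, hb, h⟩
    have hS : spinorInner (x, y) (u, v) =
        ((-(b * (Complex.normSq x + Complex.normSq y)) : ℝ) : ℂ) * Complex.I := by
      rw [h]
      push_cast
      rw [Complex.normSq_eq_conj_mul_self, Complex.normSq_eq_conj_mul_self]
      simp only [spinorInner, Zmap, Prod.fst_add, Prod.smul_fst, Prod.snd_add, Prod.smul_snd,
        smul_eq_mul, Complex.real_smul]
      ring
    have := mul_pos hb hN
    rw [hS, Complex.re_ofReal_mul, Complex.im_ofReal_mul, Complex.I_re, Complex.I_im]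
    constructor
    · simp
    · linarith
end

section
/- For every κ ∈ ℂ² ∖ {0} (regarded as a 2×1 complex matrix), the three 2×2 Hermitian matrices κκ*, κκᵀJ + J·conj(κ)·κ*, and −i(κκᵀJ − J·conj(κ)·κ*) are linearly independent over ℝ. In particular, D_κf(Z(κ)) = κκᵀJ + J·conj(κ)·κ* is not a real multiple of f(κ) = κκ*. -/
open Matrix

/-- A spinor κ = (ξ,η) ∈ ℂ² regarded as a column vector (2×1 complex matrix). -/
def toCol (κ : ℂ × ℂ) : Matrix (Fin 2) (Fin 1) ℂ := Matrix.of ![![κ.1], ![κ.2]]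

theorem core_aux (κ : ℂ × ℂ) (hκ : κ ≠ 0) (a b c : ℝ)
    (h : a • (toCol κ * (toCol κ)ᴴ) +
      b • (toCol κ * (toCol κ)ᵀ * Jmat + Jmat * (toCol κ).map (starRingEnd ℂ) * (toCol κ)ᴴ) +
      c • ((-Complex.I) •
          (toCol κ * (toCol κ)ᵀ * Jmat - Jmat * (toCol κ).map (starRingEnd ℂ) * (toCol κ)ᴴ)) = 0) :
    a = 0 ∧ b = 0 ∧ c = 0 := by
  obtain ⟨x, y⟩ := κ
  have h00 := congrFun (congrFun h 0) 0
  have h01 := congrFun (congrFun h 0) 1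
  have h11 := congrFun (congrFun h 1) 1
  simp only [Matrix.add_apply, Matrix.sub_apply, Matrix.smul_apply, Matrix.mul_apply, Fin.sum_univ_two,
    Fin.sum_univ_one, Matrix.conjTranspose_apply, Matrix.transpose_apply, Matrix.map_apply,
    Matrix.zero_apply] at h00 h01 h11
  simp [toCol, Jmat] at h00 h01 h11
  have hI : Complex.I * Complex.I = -1 := Complex.I_mul_I
  have hN : x * starRingEnd ℂ x + y * starRingEnd ℂ y ≠ 0 := by
    rw [Complex.mul_conj, Complex.mul_conj]
    norm_cast
    intro h0
    have hx := Complex.normSq_nonneg x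
    have hy := Complex.normSq_nonneg y
    apply hκ
    have h1 : Complex.normSq x = 0 := by linarith
    have h2 : Complex.normSq y = 0 := by linarith
    rw [Complex.normSq_eq_zero] at h1 h2
    simp [h1, h2]
  generalize starRingEnd ℂ x = x' at *
  generalize starRingEnd ℂ y = y' at *
  have ha : (a : ℂ) = 0 := by
    have : (a : ℂ) * (x * x' + y * y') = 0 := by linear_combination h00 + h11
    exact (mul_eq_zero.mp this).resolve_right hN
  rw [ha] at h00 h01 h11
  have e1 : (b - Complex.I * c) * (x * y) = (b + Complex.I * c) * (x' * y') := by
    linear_combination Complex.I * h00 + ((b - Complex.I * c) * (x * y) - (b + Complex.I * c) * (x' * y')) * hI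
  have e2 : (b - Complex.I * c) * (x * x) + (b + Complex.I * c) * (y' * y') = 0 := by
    linear_combination -Complex.I * h01 + ((b - Complex.I * c) * (x * x) + (b + Complex.I * c) * (y' * y')) * hI
  have e3 : (b - Complex.I * c) * x = 0 := by
    have : ((b - Complex.I * c) * x) * (x * x' + y * y') = 0 := by
      linear_combination x' * e2 + y' * e1
    exact (mul_eq_zero.mp this).resolve_right hN
  have e4 : (b + Complex.I * c) * y' = 0 := by
    have : ((b + Complex.I * c) * y') * (x * x' + y * y') = 0 := by
      linear_combination y * e2 - x * e1
    exact (mul_eq_zero.mp this).resolve_right hN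
  refine ⟨by exact_mod_cast ha, ?_⟩
  rcases mul_eq_zero.mp e3 with e | e
  · have r := congrArg Complex.re e
    have i := congrArg Complex.im e
    simp at r i
    exact ⟨r, i⟩
  · rcases mul_eq_zero.mp e4 with e' | e'
    · have r := congrArg Complex.re e'
      have i := congrArg Complex.im e'
      simp at r i
      exact ⟨r, i⟩
    · exact absurd (by rw [e, e']; ring) hN

/-- For κ ≠ 0, the Hermitian matrices κκ*, κκᵀJ + J·conj(κ)·κ*, −i(κκᵀJ − J·conj(κ)·κ*)
are linearly independent over ℝ. In particular D_κf(Z(κ)) = κκᵀJ + J·conj(κ)·κ* is not a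
real multiple of f(κ) = κκ*. -/
theorem flag_linear_independent (κ : ℂ × ℂ) (hκ : κ ≠ 0) :
    LinearIndependent ℝ
      ![toCol κ * (toCol κ)ᴴ,
        toCol κ * (toCol κ)ᵀ * Jmat + Jmat * (toCol κ).map (starRingEnd ℂ) * (toCol κ)ᴴ,
        (-Complex.I) •
          (toCol κ * (toCol κ)ᵀ * Jmat - Jmat * (toCol κ).map (starRingEnd ℂ) * (toCol κ)ᴴ)] ∧
    ∀ t : ℝ,
      toCol κ * (toCol κ)ᵀ * Jmat + Jmat * (toCol κ).map (starRingEnd ℂ) * (toCol κ)ᴴ ≠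
        t • (toCol κ * (toCol κ)ᴴ) := by
  refine ⟨?_, ?_⟩
  · rw [Fintype.linearIndependent_iff]
    intro g hg
    rw [Fin.sum_univ_three] at hg
    obtain ⟨h0, h1, h2⟩ := core_aux κ hκ (g 0) (g 1) (g 2) hg
    intro i
    fin_cases i
    · exact h0
    · exact h1
    · exact h2
  · intro t ht
    have := core_aux κ hκ (-t) 1 0 (by rw [ht]; simp)
    exact one_ne_zero this.2.1
end

section
/- Let n = (T₀,X₀,Y₀,Z₀) ∈ ℝ⁴ lie on the positive light cone (⟨n,n⟩ = 0 and T₀ > 0) and let c ∈ ℝ. Then the lightlike affine 3-plane Π = {x ∈ ℝ^{1,3} : ⟨x,n⟩ = c} has nonempty intersection with the hyperboloid ℍ = {x = (T,X,Y,Z) ∈ ℝ^{1,3} : ⟨x,x⟩ = 1, T > 0} if and only if c > 0. -/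
/-- Let n = (T₀,X₀,Y₀,Z₀) lie on the positive light cone and c ∈ ℝ. The lightlike 3-plane
{x : ⟨x,n⟩ = c} meets the hyperboloid ℍ = {x : ⟨x,x⟩ = 1, T > 0} iff c > 0. -/
theorem lightlike_plane_meets_hyperboloid (T₀ X₀ Y₀ Z₀ c : ℝ)
    (hT : 0 < T₀) (hnull : T₀^2 - X₀^2 - Y₀^2 - Z₀^2 = 0) :
    (∃ T X Y Z : ℝ, T^2 - X^2 - Y^2 - Z^2 = 1 ∧ 0 < T ∧
      T*T₀ - X*X₀ - Y*Y₀ - Z*Z₀ = c) ↔ 0 < c := by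
  constructor
  · rintro ⟨T, X, Y, Z, h1, hTp, rfl⟩
    have hS : (X*X₀ + Y*Y₀ + Z*Z₀)^2 < (T*T₀)^2 := by
      have e1 : T^2 = 1 + (X^2 + Y^2 + Z^2) := by linarith
      have e2 : T₀^2 = X₀^2 + Y₀^2 + Z₀^2 := by linarith
      have e3 : (T*T₀)^2 = T₀^2 + (X^2 + Y^2 + Z^2) * (X₀^2 + Y₀^2 + Z₀^2) := by
        rw [mul_pow, e1, e2]; ring
      rw [e3]
      nlinarith [sq_nonneg (X*Y₀ - Y*X₀), sq_nonneg (X*Z₀ - Z*X₀), sq_nonneg (Y*Z₀ - Z*Y₀),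
        pow_pos hT 2]
    have := lt_of_pow_lt_pow_left₀ 2 (by positivity) hS
    linarith
  · intro hc
    refine ⟨(1/(2*c) + c/(2*T₀^2))*T₀, (1/(2*c) - c/(2*T₀^2))*X₀,
      (1/(2*c) - c/(2*T₀^2))*Y₀, (1/(2*c) - c/(2*T₀^2))*Z₀, ?_, by positivity, ?_⟩
    · have : 4 * (1/(2*c)) * (c/(2*T₀^2)) * T₀^2 = 1 := by field_simp; norm_num
      linear_combination this + (1/(2*c) - c/(2*T₀^2))^2 * hnull
    · have : 2 * (c/(2*T₀^2)) * T₀^2 = c := by field_simp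
      linear_combination this + (1/(2*c) - c/(2*T₀^2)) * hnull
end
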